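/- For every odd k ≥ 3 and every n, the online Ramsey number satisfies r̃(C_k, P_n) ≤ 3n + 50k, where P_n is the path on n vertices. -/

import Mathlib

open SimpleGraph

/-- A board state: the set of red edges and the set of blue edges. -/
abbrev Board : Type := Set (Sym2 ℕ) × Set (Sym2 ℕ)

/-- The set of already colored edges of a board. -/
def Board.colored (B : Board) : Set (Sym2 ℕ) := B.1 ∪ B.2

/-- A Builder strategy selects an edge given the current board. -/
abbrev BuilderStrat : Type := Board → Sym2 ℕ

/-- A Painter strategy colors the selected edge (true = red, false = blue). -/
abbrev PainterStrat : Type := Board → Sym2 ℕ → Bool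

/-- The board after `t` rounds of play from `init`. -/
def playGame (b : BuilderStrat) (p : PainterStrat) (init : Board) : ℕ → Board
  | 0 => init
  | t + 1 =>
      let B := playGame b p init t
      let e := b B
      if p B e then (insert e B.1, B.2) else (B.1, insert e B.2)

/-- Builder's strategy is valid from `init`: along any play it always selects a
previously unselected non-loop edge. -/
def ValidFrom (b : BuilderStrat) (init : Board) : Prop :=
  ∀ p : PainterStrat, ∀ t : ℕ,
    ¬ (b (playGame b p init t)).IsDiag ∧
      b (playGame b p init t) ∉ (playGame b p init t).colored

/-- Builder can force the winning condition `W` within `t` rounds, starting from `init`. -/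
def BuilderWinsIn (init : Board) (W : Board → Prop) (t : ℕ) : Prop :=
  ∃ b : BuilderStrat, ValidFrom b init ∧
    ∀ p : PainterStrat, ∃ s, s ≤ t ∧ W (playGame b p init s)

/-- `G` contains a copy of `H`. -/
def HasCopy {α β : Type} (H : SimpleGraph α) (G : SimpleGraph β) : Prop :=
  ∃ f : α ↪ β, ∀ x y, H.Adj x y → G.Adj (f x) (f y)

/-- The red part of the board contains a copy of `H`. -/
def RedCopy {α : Type} (H : SimpleGraph α) (B : Board) : Prop :=
  HasCopy H (fromEdgeSet B.1)

/-- The blue part of the board contains a copy of `H`. -/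
def BlueCopy {α : Type} (H : SimpleGraph α) (B : Board) : Prop :=
  HasCopy H (fromEdgeSet B.2)

/-- The empty board. -/
def emptyBoard : Board := (∅, ∅)

/-- Winning condition: a red `C_k` or a blue `C_n`. -/
def WinCC (k n : ℕ) (B : Board) : Prop :=
  RedCopy (cycleGraph k) B ∨ BlueCopy (cycleGraph n) B

/-- Winning condition: a red `C_k` or a blue path on `n` vertices. -/
def WinCP (k n : ℕ) (B : Board) : Prop :=
  RedCopy (cycleGraph k) B ∨ BlueCopy (pathGraph n) B

/-- A board consisting of a single blue cycle on the vertices `0, …, m-1`. -/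
def blueCycleBoard (m : ℕ) : Board :=
  (∅, {e | ∃ i : ℕ, i < m ∧ e = s(i, (i + 1) % m)})

/-- A board consisting of a single blue path on the vertices `0, …, m-1`. -/
def bluePathBoard (m : ℕ) : Board :=
  (∅, {e | ∃ i : ℕ, i + 1 < m ∧ e = s(i, i + 1)})

/-- A board with finitely many colored edges has an uncolored non-loop edge. -/
theorem exists_fresh_edge (B : Board) (hB : B.colored.Finite) :
    ∃ e : Sym2 ℕ, ¬ e.IsDiag ∧ e ∉ B.colored := by
  have hinj : Function.Injective (fun i : ℕ => s(0, i + 1)) := by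
    intro i j h
    simpa using h
  obtain ⟨e, ⟨i, rfl⟩, hi⟩ :=
    (Set.infinite_range_of_injective hinj).exists_notMem_finite hB
  exact ⟨_, by simp, hi⟩

theorem playGame_colored_finite (b : BuilderStrat) (p : PainterStrat) (init : Board)
    (h : init.colored.Finite) (t : ℕ) : (playGame b p init t).colored.Finite := by
  induction t with
  | zero => exact h
  | succ t ih =>
    have ih' : ((playGame b p init t).1 ∪ (playGame b p init t).2).Finite := ih
    rw [Set.finite_union] at ih'
    simp only [playGame]
    split_ifs
    · exact (ih'.1.insert _).union ih'.2
    · exact ih'.1.union (ih'.2.insert _)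

/-- `Force W m B`: from the board `B`, Builder can reach `W` within `m` rounds. -/
def Force (W : Board → Prop) : ℕ → Board → Prop
  | 0, B => W B
  | m + 1, B => W B ∨ ∃ e : Sym2 ℕ, ¬ e.IsDiag ∧ e ∉ B.colored ∧
      Force W m (insert e B.1, B.2) ∧ Force W m (B.1, insert e B.2)

theorem Force.of_win {W : Board → Prop} {B : Board} (h : W B) (m : ℕ) : Force W m B := by
  cases m with
  | zero => exact h
  | succ m => exact Or.inl h

theorem Force.succ {W : Board → Prop} {m : ℕ} :
    ∀ {B : Board}, Force W m B → Force W (m + 1) B := by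
  induction m with
  | zero => exact fun h => Or.inl h
  | succ m ih =>
    rintro B (h | ⟨e, h1, h2, h3, h4⟩)
    · exact Or.inl h
    · exact Or.inr ⟨e, h1, h2, ih h3, ih h4⟩

/-- If Builder can force `W`, then Builder has a winning strategy. -/
theorem Force.builderWinsIn {W : Board → Prop} {init : Board} (hf : init.colored.Finite)
    {m : ℕ} (h : Force W m init) : BuilderWinsIn init W m := by
  classical
  have key : ∀ B : Board, ∃ e : Sym2 ℕ, (B.colored.Finite → ¬ e.IsDiag ∧ e ∉ B.colored) ∧
      ∀ m, Force W m B → (∀ j < m, ¬ Force W j B) → 0 < m →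
        Force W (m - 1) (insert e B.1, B.2) ∧ Force W (m - 1) (B.1, insert e B.2) := by
    intro B
    by_cases hB : ∃ m, Force W m B ∧ (∀ j < m, ¬ Force W j B) ∧ 0 < m
    · obtain ⟨m, h1, h2, h3⟩ := hB
      obtain ⟨m, rfl⟩ : ∃ m', m = m' + 1 := ⟨m - 1, by omega⟩
      rcases h1 with h1 | ⟨e, e1, e2, e3, e4⟩
      · exact absurd (Force.of_win h1 0) (h2 0 h3)
      · refine ⟨e, fun _ => ⟨e1, e2⟩, fun m' g1 g2 _ => ?_⟩
        have : m' = m + 1 := by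
          rcases lt_trichotomy m' (m + 1) with hlt | heq | hgt
          · exact absurd g1 (h2 _ hlt)
          · exact heq
          · exact absurd (Or.inr ⟨e, e1, e2, e3, e4⟩) (g2 _ hgt)
        subst this
        exact ⟨e3, e4⟩
    · by_cases hfin : B.colored.Finite
      · obtain ⟨e, e1, e2⟩ := exists_fresh_edge B hfin
        exact ⟨e, fun _ => ⟨e1, e2⟩, fun m g1 g2 g3 => absurd ⟨m, g1, g2, g3⟩ hB⟩
      · exact ⟨s(0, 1), fun hc => absurd hc hfin, fun m g1 g2 g3 => absurd ⟨m, g1, g2, g3⟩ hB⟩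
  choose b hb1 hb2 using key
  refine ⟨b, fun p t => hb1 _ (playGame_colored_finite b p init hf t), fun p => ?_⟩
  by_contra! hcon
  have : ∀ t ≤ m, Force W (m - t) (playGame b p init t) := by
    intro t
    induction t with
    | zero => exact fun _ => h
    | succ t ih =>
      intro ht
      have hF := ih (by omega)
      have hex : ∃ j, Force W j (playGame b p init t) := ⟨_, hF⟩
      have hle := Nat.find_min' hex hF
      have hpos : 0 < Nat.find hex := by
        by_contra h0
        have h0' : Nat.find hex = 0 := by omega
        have := Nat.find_spec hex
        rw [h0'] at this
        exact hcon t (by omega) this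
      obtain ⟨g1, g2⟩ := hb2 _ _ (Nat.find_spec hex) (fun j hj => Nat.find_min hex hj) hpos
      have up : ∀ B : Board, Force W (Nat.find hex - 1) B → Force W (m - (t + 1)) B := by
        intro B hB
        have hmono : Monotone (fun j => Force W j B) := monotone_nat_of_le_succ fun _ => Force.succ
        exact hmono (by omega) hB
      simp only [playGame]
      split_ifs
      · exact up _ g1
      · exact up _ g2
  have hm := this m le_rfl
  rw [Nat.sub_self] at hm
  exact hcon m le_rfl hm

/-- `RedCycle k r`: the edge set `r` contains a cycle on `k` vertices. -/
def RedCycle (k : ℕ) (r : Set (Sym2 ℕ)) : Prop :=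
  ∃ l : List ℕ, l.Nodup ∧ l.length = k ∧ l.IsChain (fun u v => s(u, v) ∈ r) ∧
    ∀ u ∈ l.head?, ∀ v ∈ l.getLast?, s(v, u) ∈ r

/-- `l` lists the vertices of a path with edges in `b`. -/
def IsPath (b : Set (Sym2 ℕ)) (l : List ℕ) : Prop :=
  l.IsChain (fun u v => s(u, v) ∈ b)

theorem Fin.succ_mod_of_sub {m : ℕ} {x y : Fin m} (h : (y - x).val = 1) :
    (x.val + 1) % m = y.val := by
  have hx := x.isLt
  have hy := y.isLt
  rw [Fin.val_sub] at h
  rcases Nat.lt_or_ge y.val x.val with hlt | hge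
  · rw [Nat.mod_eq_of_lt (by omega)] at h
    have : x.val + 1 = m + y.val := by omega
    rw [this, Nat.add_mod_left, Nat.mod_eq_of_lt hy]
  · have e : m - x.val + y.val = m + (y.val - x.val) := by omega
    rw [e, Nat.add_mod_left, Nat.mod_eq_of_lt (by omega)] at h
    rw [Nat.mod_eq_of_lt (by omega)]
    omega

theorem winCP_of_redCycle {k n : ℕ} (hk : 3 ≤ k) {B : Board} (h : RedCycle k B.1) :
    WinCP k n B := by
  obtain ⟨l, hnd, rfl, hc, hclose⟩ := h
  refine Or.inl ⟨⟨fun i => l[i], fun i j hij => ?_⟩, ?_⟩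
  · exact Fin.ext ((hnd.getElem_inj_iff).1 hij)
  · have hstep : ∀ i : ℕ, ∀ h : i + 1 < l.length, s(l[i], l[i + 1]) ∈ B.1 :=
      fun i h => List.isChain_iff_getElem.1 hc i h
    have hlast : s(l[l.length - 1], l[0]) ∈ B.1 := by
      apply hclose
      · simp [List.head?_eq_getElem?]
      · simp [List.getLast?_eq_getElem?]
    have key : ∀ x y : Fin l.length, (x.val + 1) % l.length = y.val → s(l[x], l[y]) ∈ B.1 := by
      intro x y hxy
      have hx := x.isLt
      by_cases hlt : x.val + 1 < l.length
      · rw [Nat.mod_eq_of_lt hlt] at hxy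
        simpa [← hxy] using hstep x.val hlt
      · have hx' : x.val = l.length - 1 := by omega
        have hy : y.val = 0 := by rw [← hxy, hx', Nat.sub_add_cancel (by omega), Nat.mod_self]
        simpa [hx', hy] using hlast
    intro x y hxy
    rw [fromEdgeSet_adj]
    refine ⟨?_, fun h => hxy.ne (Fin.ext ((hnd.getElem_inj_iff).1 h))⟩
    rw [cycleGraph_adj'] at hxy
    have hx := x.isLt
    have hy := y.isLt
    rcases hxy with h | h
    · rw [Sym2.eq_swap]
      exact key _ _ (Fin.succ_mod_of_sub h)
    · exact key _ _ (Fin.succ_mod_of_sub h)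

theorem winCP_of_bluePath {k n : ℕ} {B : Board} {l : List ℕ} (hnd : l.Nodup)
    (hc : IsPath B.2 l) (hl : n ≤ l.length) : WinCP k n B := by
  refine Or.inr ⟨⟨fun i => l[i.val]'(by omega), fun i j hij => ?_⟩, ?_⟩
  · exact Fin.ext ((hnd.getElem_inj_iff).1 hij)
  · intro x y hxy
    rw [fromEdgeSet_adj]
    refine ⟨?_, fun h => hxy.ne (Fin.ext ((hnd.getElem_inj_iff).1 h))⟩
    have hstep : ∀ i : ℕ, ∀ h : i + 1 < l.length, s(l[i], l[i + 1]) ∈ B.2 :=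
      fun i h => List.isChain_iff_getElem.1 hc i h
    have hx := x.isLt
    have hy := y.isLt
    rw [pathGraph_adj] at hxy
    rcases hxy with h | h
    · change s(l[x.val]'(by omega), l[y.val]'(by omega)) ∈ B.2
      simpa [← h] using hstep x.val (by omega)
    · rw [Sym2.eq_swap]
      change s(l[y.val]'(by omega), l[x.val]'(by omega)) ∈ B.2
      simpa [← h] using hstep y.val (by omega)

/-- From every board containing the red edges `r` and the blue edges `b`, Builder can force a red
`C_k` or a blue path on `n` vertices within `m` rounds. -/
def Win (k n m : ℕ) (r b : Set (Sym2 ℕ)) : Prop :=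
  ∀ B : Board, r ⊆ B.1 → b ⊆ B.2 → Force (WinCP k n) m B

section Win

variable {k n m m' : ℕ} {r r' b b' : Set (Sym2 ℕ)}

theorem Win.mono (h : Win k n m r b) (hm : m ≤ m') (hr : r ⊆ r') (hb : b ⊆ b') :
    Win k n m' r' b' := fun B h1 h2 =>
  (monotone_nat_of_le_succ (f := fun j => Force (WinCP k n) j B) fun _ => Force.succ) hm
    (h B (hr.trans h1) (hb.trans h2))

theorem Win.le (h : Win k n m r b) (hm : m ≤ m') : Win k n m' r b :=
  h.mono hm subset_rfl subset_rfl

theorem Win.ask {u v : ℕ} (huv : u ≠ v) (h1 : Win k n m (insert s(u, v) r) b)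
    (h2 : Win k n m r (insert s(u, v) b)) : Win k n (m + 1) r b := by
  intro B hr hb
  by_cases e1 : s(u, v) ∈ B.1
  · exact (h1 B (Set.insert_subset e1 hr) hb).succ
  by_cases e2 : s(u, v) ∈ B.2
  · exact (h2 B hr (Set.insert_subset e2 hb)).succ
  · refine Or.inr ⟨s(u, v), by simpa using huv, ?_, ?_, ?_⟩
    · rintro (h | h)
      exacts [e1 h, e2 h]
    · exact h1 _ (Set.insert_subset_insert hr) hb
    · exact h2 _ hr (Set.insert_subset_insert hb)

theorem Win.of_redCycle (hk : 3 ≤ k) (h : RedCycle k r) : Win k n m r b := by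
  rintro B hr -
  obtain ⟨l, h1, h2, h3, h4⟩ := h
  exact Force.of_win (winCP_of_redCycle hk
    ⟨l, h1, h2, h3.imp fun _ _ h => hr h, fun u hu v hv => hr (h4 u hu v hv)⟩) m

theorem Win.of_bluePath {l : List ℕ} (hnd : l.Nodup) (hc : IsPath b l) (hl : n ≤ l.length) :
    Win k n m r b := by
  rintro B - hb
  exact Force.of_win (winCP_of_bluePath hnd (hc.imp fun _ _ h => hb h) hl) m

end Win

theorem IsPath.mono {b b' : Set (Sym2 ℕ)} {l : List ℕ} (h : IsPath b l) (hb : b ⊆ b') :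
    IsPath b' l := h.imp fun _ _ h => hb h

theorem IsPath.insert {b : Set (Sym2 ℕ)} {l : List ℕ} {e : Sym2 ℕ} (h : IsPath b l) :
    IsPath (insert e b) l := h.mono (Set.subset_insert _ _)

theorem IsPath.reverse {b : Set (Sym2 ℕ)} {l : List ℕ} (h : IsPath b l) : IsPath b l.reverse := by
  rw [IsPath, List.isChain_reverse]
  exact h.imp fun u v h => by rwa [Sym2.eq_swap]

theorem exists_fresh (l : List ℕ) : ∃ y, y ∉ l := by
  obtain ⟨y, hy⟩ := Infinite.exists_notMem_finset l.toFinset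
  exact ⟨y, by simpa using hy⟩

theorem isPath_append {b : Set (Sym2 ℕ)} {l l' : List ℕ} :
    IsPath b (l ++ l') ↔ IsPath b l ∧ IsPath b l' ∧
      ∀ x ∈ l.getLast?, ∀ y ∈ l'.head?, s(x, y) ∈ b := List.isChain_append

theorem isPath_cons_cons {b : Set (Sym2 ℕ)} {u v : ℕ} {l : List ℕ} :
    IsPath b (u :: v :: l) ↔ s(u, v) ∈ b ∧ IsPath b (v :: l) := List.isChain_cons_cons

/-- Joining the heads of two blue paths. -/
theorem IsPath.join {b : Set (Sym2 ℕ)} {u v : ℕ} {l l' : List ℕ} (h : IsPath b (u :: l))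
    (h' : IsPath b (v :: l')) (he : s(u, v) ∈ b) : IsPath b (l.reverse ++ u :: v :: l') := by
  have : l.reverse ++ u :: v :: l' = (u :: l).reverse ++ v :: l' := by simp
  rw [this, isPath_append]
  exact ⟨h.reverse, h', by simpa using he⟩

theorem IsPath.cons {b : Set (Sym2 ℕ)} {u v : ℕ} {l : List ℕ} (h : IsPath b (v :: l))
    (he : s(u, v) ∈ b) : IsPath b (u :: v :: l) := isPath_cons_cons.2 ⟨he, h⟩

theorem IsPath.tail {b : Set (Sym2 ℕ)} {v : ℕ} {l : List ℕ} (h : IsPath b (v :: l)) :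
    IsPath b l := List.IsChain.tail h

/-- Builder either wins or obtains a red triangle disjoint from two blue paths of large total
length. -/
theorem win_of_triangle_phase {k n E : ℕ}
    (hE : ∀ (m : ℕ) (r b : Set (Sym2 ℕ)) (x y z : ℕ) (P Q : List ℕ), s(x, y) ∈ r → s(y, z) ∈ r →
      s(z, x) ∈ r → IsPath b P → IsPath b Q → ([x, y, z] ++ (P ++ Q)).Nodup →
      E + 3 * (n - (P.length + Q.length)) ≤ m → Win k n m r b) (m : ℕ) :
    (∀ (r b : Set (Sym2 ℕ)) (a : ℕ) (A : List ℕ), (a :: A).Nodup → IsPath b (a :: A) →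
      E + 20 + 2 * (n - (A.length + 1)) + n ≤ m → Win k n m r b) ∧
    (∀ (r b : Set (Sym2 ℕ)) (a : ℕ) (A : List ℕ) (t' : ℕ) (B : List ℕ) (t : ℕ),
      (a :: A ++ t' :: B).Nodup → IsPath b (a :: A) → IsPath b (t' :: B) → t ∈ t' :: B →
      s(a, t) ∈ r →
      E + 20 + 2 * (n - (A.length + 1)) + (n - (B.length + 1)) ≤ m → Win k n m r b) := by
  induction m using Nat.strong_induction_on with
  | _ m ih =>
  refine ⟨fun r b a A hnd hA hm => ?_, fun r b a A t' B t hnd hA hB ht hat hm => ?_⟩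
  · by_cases hn : n ≤ (a :: A).length
    · exact Win.of_bluePath hnd hA hn
    simp only [List.length_cons] at hn
    obtain ⟨m, rfl⟩ : ∃ m', m = m' + 1 := ⟨m - 1, by omega⟩
    obtain ⟨w, hw⟩ := exists_fresh (a :: A)
    apply Win.ask (u := a) (v := w)
    · rintro rfl
      simp at hw
    · refine (ih m (by omega)).2 _ _ a A w [] w ?_ hA ?_ ?_ ?_ ?_
      · have : (w :: a :: A).Nodup := List.nodup_cons.2 ⟨hw, hnd⟩
        exact (List.perm_append_comm (l₁ := [w])).nodup_iff.1 this
      · exact List.isChain_singleton _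
      · simp
      · simp
      · simp
        omega
    · refine (ih m (by omega)).1 _ _ w (a :: A) (List.nodup_cons.2 ⟨hw, hnd⟩) (hA.insert.cons ?_) ?_
      · simp [Sym2.eq_swap]
      · simp only [List.length_cons]
        omega
  · by_cases hn : n ≤ (a :: A).length
    · exact Win.of_bluePath hnd.of_append_left hA hn
    by_cases hn' : n ≤ (t' :: B).length
    · exact Win.of_bluePath hnd.of_append_right hB hn'
    simp only [List.length_cons] at hn hn'
    obtain ⟨m, rfl⟩ : ∃ m', m = m' + 4 := ⟨m - 4, by omega⟩
    obtain ⟨y, hy⟩ := exists_fresh (a :: A ++ t' :: B)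
    have hynd : (y :: (a :: A ++ t' :: B)).Nodup := List.nodup_cons.2 ⟨hy, hnd⟩
    apply Win.ask (u := y) (v := t')
    · rintro rfl
      simp at hy
    swap
    · refine (ih (m + 3) (by omega)).2 _ _ a A y (t' :: B) t ?_ hA.insert (hB.insert.cons ?_) ?_ hat
        ?_
      · exact List.perm_middle.nodup_iff.2 hynd
      · simp
      · exact List.mem_cons_of_mem _ ht
      · simp only [List.length_cons]
        omega
    apply Win.ask (u := y) (v := a)
    · rintro rfl
      simp at hy
    swap
    · refine (ih (m + 2) (by omega)).2 _ _ y (a :: A) t' B t' hynd (hA.insert.cons ?_) hB.insert ?_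
        ?_ ?_
      · simp
      · simp
      · simp
      · simp only [List.length_cons]
        omega
    have hexit : ([a, y, t'] ++ (A ++ B)).Nodup := by
      refine List.Perm.nodup_iff ?_ |>.1 hynd
      grind
    by_cases htt : t = t'
    · subst htt
      refine hE _ _ _ a y t A B ?_ ?_ ?_ hA.tail hB.tail hexit (by omega)
      · simp [Sym2.eq_swap]
      · simp
      · simp [Sym2.eq_swap, hat]
    have htB : t ∈ B := by simpa [htt] using ht
    have hBpos := List.length_pos_of_mem htB
    apply Win.ask (u := a) (v := t')
    · rintro rfl
      simp at hnd
    · refine hE _ _ _ a y t' A B ?_ ?_ ?_ hA.tail hB.tail hexit (by omega)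
      · simp [Sym2.eq_swap]
      · simp
      · simp [Sym2.eq_swap]
    obtain ⟨B, c, rfl⟩ : ∃ B' c, B = B' ++ [c] :=
      ⟨_, _, (List.dropLast_append_getLast (List.ne_nil_of_mem htB)).symm⟩
    set A₂ := B.reverse ++ t' :: a :: A with hA₂
    have hlen : (c :: A₂).length = A.length + B.length + 3 := by
      simp [hA₂]
      omega
    have hpath : IsPath (insert s(a, t') b) (c :: A₂) := by
      have := (hA.insert.join (hB.insert (e := s(a, t'))) (Set.mem_insert _ _)).reverse
      simpa [hA₂] using this
    have hnd₂ : (y :: c :: A₂).Nodup := by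
      refine List.Perm.nodup_iff ?_ |>.1 hynd
      rw [hA₂]
      grind
    by_cases hn₂ : n ≤ (c :: A₂).length
    · exact Win.of_bluePath hnd₂.of_cons hpath hn₂
    simp only [List.length_cons, List.length_append, List.length_nil] at hn₂ hlen hm hn'
    apply Win.ask (u := y) (v := c)
    · rintro rfl
      simp at hnd₂
    swap
    · refine (ih m (by omega)).1 _ _ y (c :: A₂) hnd₂ (hpath.insert.cons (by simp)) ?_
      simp only [List.length_cons]
      omega
    by_cases hB0 : B = []
    · subst hB0
      obtain rfl : t = c := by simpa using htB
      refine hE _ _ _ a y t A [t'] ?_ ?_ ?_ hA.tail.insert (List.isChain_singleton _) ?_ ?_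
      · simp [Sym2.eq_swap]
      · simp
      · simp [Sym2.eq_swap, hat]
      · refine List.Perm.nodup_iff ?_ |>.1 hynd
        grind
      · simp at hm ⊢
        omega
    · have := List.length_pos_iff.2 hB0
      refine (ih m (by omega)).2 _ _ c A₂ y [] y ?_ hpath (List.isChain_singleton _) ?_ ?_ ?_
      · exact (List.perm_append_comm (l₁ := [y])).nodup_iff.1 hnd₂
      · simp
      · simp [Sym2.eq_swap]
      · simp at hm ⊢
        omega

/-- Builder offers the edges of a path one by one; either all of them become red, or one of them
becomes blue. -/
theorem Win.offer_path {k n m : ℕ} {b : Set (Sym2 ℕ)} (l : List ℕ) :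
    ∀ {r : Set (Sym2 ℕ)},
      l.IsChain (fun u v => u ≠ v ∧ ∀ r' : Set (Sym2 ℕ), Win k n m r' (insert s(u, v) b)) →
      (∀ r' : Set (Sym2 ℕ), r ⊆ r' → IsPath r' l → Win k n m r' b) →
      Win k n (m + l.length) r b := by
  induction l with
  | nil => exact fun _ h => h _ subset_rfl List.isChain_nil
  | cons u l ih =>
    intro r hc h
    cases l with
    | nil => exact (h r subset_rfl (List.isChain_singleton _)).le (by simp)
    | cons v l =>
      rw [List.isChain_cons_cons] at hc
      refine Win.ask (m := m + (v :: l).length) hc.1.1 ?_ ((hc.1.2 r).le (by simp))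
      refine ih hc.2 fun r' hr' hp => h r' ((Set.subset_insert _ _).trans hr') (hp.cons ?_)
      exact hr' (Set.mem_insert _ _)

/-- The first `j` terms of the sequence alternating between the entries of two lists. -/
def zigzag : ℕ → List ℕ → List ℕ → List ℕ
  | 0, _, _ => []
  | _ + 1, [], _ => []
  | j + 1, p :: P, Q => p :: zigzag j Q P

theorem zigzag_subset (j : ℕ) : ∀ P Q : List ℕ, zigzag j P Q ⊆ P ++ Q := by
  induction j with
  | zero => simp [zigzag]
  | succ j ih =>
    intro P Q
    cases P with
    | nil => simp [zigzag]
    | cons p P =>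
      intro x hx
      rw [zigzag, List.mem_cons] at hx
      rcases hx with rfl | hx
      · simp
      · have := ih _ _ hx
        simp only [List.mem_append, List.cons_append, List.mem_cons] at this ⊢
        tauto

theorem zigzag_nodup (j : ℕ) : ∀ P Q : List ℕ, (P ++ Q).Nodup → (zigzag j P Q).Nodup := by
  induction j with
  | zero => simp [zigzag]
  | succ j ih =>
    intro P Q h
    cases P with
    | nil => simp [zigzag]
    | cons p P =>
      rw [List.cons_append, List.nodup_cons] at h
      rw [zigzag, List.nodup_cons]
      refine ⟨fun hp => h.1 ?_, ih _ _ (List.perm_append_comm.nodup_iff.1 h.2)⟩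
      have := zigzag_subset _ _ _ hp
      simp only [List.mem_append] at this ⊢
      tauto

theorem zigzag_length (j : ℕ) : ∀ P Q : List ℕ, j ≤ 2 * P.length → j ≤ 2 * Q.length + 1 →
    (zigzag j P Q).length = j := by
  induction j with
  | zero => simp [zigzag]
  | succ j ih =>
    intro P Q h1 h2
    cases P with
    | nil => simp at h1
    | cons p P =>
      simp only [List.length_cons] at h1
      simp [zigzag, ih Q P (by omega) (by omega)]

theorem zigzag_append (j : ℕ) : ∀ (P Q : List ℕ) (p q : ℕ) (P' Q' : List ℕ), P.length = j →
    Q.length = j → zigzag (2 * j + 2) (P ++ p :: P') (Q ++ q :: Q') =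
      zigzag (2 * j) P Q ++ [p, q] := by
  induction j with
  | zero =>
    intro P Q p q P' Q' hP hQ
    simp [List.length_eq_zero_iff.1 hP, List.length_eq_zero_iff.1 hQ, zigzag]
  | succ j ih =>
    intro P Q p q P' Q' hP hQ
    cases P with
    | nil => simp at hP
    | cons u P =>
      cases Q with
      | nil => simp at hQ
      | cons v Q =>
        have := ih P Q p q P' Q' (by simpa using hP) (by simpa using hQ)
        simpa [Nat.mul_succ, zigzag] using this

theorem zigzag_isChain {n : ℕ} {b : Set (Sym2 ℕ)} (j : ℕ) : ∀ P Q : List ℕ, (P ++ Q).Nodup →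
    IsPath b P → IsPath b Q → n + j ≤ P.length + Q.length + 2 →
    (zigzag j P Q).IsChain (fun u v => u ≠ v ∧ ∀ (k m : ℕ) (r' : Set (Sym2 ℕ)),
      Win k n m r' (insert s(u, v) b)) := by
  induction j with
  | zero => simp [zigzag]
  | succ j ih =>
    intro P Q h hP hQ hn
    cases P with
    | nil => simp [zigzag]
    | cons p P =>
      rw [zigzag]
      have h' := ih Q P (List.perm_append_comm.nodup_iff.1 (List.nodup_cons.1 h).2) hQ hP.tail
        (by simp only [List.length_cons] at hn; omega)
      cases j with
      | zero => simp [zigzag]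
      | succ j =>
        cases Q with
        | nil => simp [zigzag]
        | cons q Q =>
          rw [zigzag] at h' ⊢
          refine List.IsChain.cons_cons ⟨?_, fun k m r' => ?_⟩ h'
          · rintro rfl
            simp at h
          · refine Win.of_bluePath (l := P.reverse ++ p :: q :: Q) ?_
              (hP.insert.join hQ.insert (Set.mem_insert _ _)) ?_
            · refine List.Perm.nodup_iff ?_ |>.1 h
              grind
            · simp at hn ⊢
              omega

/-- A red path on `k - 2` vertices whose ends are joined to the two ends of a red edge. -/
theorem redCycle_of_path {k : ℕ} {r : Set (Sym2 ℕ)} {u v : ℕ} {l : List ℕ} (hl : l.length + 2 = k)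
    (hnd : (u :: v :: l).Nodup) (hp : IsPath r l) (huv : s(u, v) ∈ r)
    (hu : ∀ x ∈ l.head?, s(u, x) ∈ r) (hv : ∀ x ∈ l.getLast?, s(v, x) ∈ r) : RedCycle k r := by
  refine ⟨l ++ [v, u], ?_, by simp [hl], ?_, ?_⟩
  · refine List.Perm.nodup_iff ?_ |>.1 hnd
    grind
  · refine List.isChain_append.2 ⟨hp, by simp [Sym2.eq_swap, huv], ?_⟩
    intro x hx y hy
    obtain rfl : v = y := by simpa using hy
    rw [Sym2.eq_swap]
    exact hv x hx
  · intro x hx y hy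
    obtain rfl : u = y := by simpa using hy
    cases l with
    | nil =>
      obtain rfl : v = x := by simpa using hx
      exact huv
    | cons z l =>
      obtain rfl : z = x := by simpa using hx
      exact hu _ (by simp)

/-- Builder joins `v` to the four vertices `p`, `p'`, `q`, `q'`. -/
theorem Win.ask_four {k n m : ℕ} {r b : Set (Sym2 ℕ)} {v p p' q q' : ℕ}
    (hv : v ≠ p ∧ v ≠ p' ∧ v ≠ q ∧ v ≠ q')
    (hp : ∀ r' b' : Set (Sym2 ℕ), r ⊆ r' → b ⊆ b' → s(v, p) ∈ r' → s(v, p') ∈ r' →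
      Win k n m r' b')
    (hq : ∀ r' b' : Set (Sym2 ℕ), r ⊆ r' → b ⊆ b' → s(v, q) ∈ r' → s(v, q') ∈ r' →
      Win k n m r' b')
    (hb : ∀ (m' : ℕ) (r' b' : Set (Sym2 ℕ)) (c d : ℕ), b ⊆ b' → c = p ∨ c = p' → d = q ∨ d = q' →
      s(v, c) ∈ b' → s(v, d) ∈ b' → Win k n m' r' b') :
    Win k n (m + 4) r b := by
  obtain ⟨h1, h2, h3, h4⟩ := hv
  have key : ∀ (r' b' : Set (Sym2 ℕ)) (c : ℕ), r ⊆ r' → b ⊆ b' → c = p ∨ c = p' → s(v, c) ∈ b' →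
      Win k n (m + 2) r' b' := by
    intro r' b' c hr hb' hc hvc
    refine Win.ask h3 (Win.ask h4 ?_ ?_) ?_
    · exact hq _ _ (by grind) hb' (by simp) (by simp)
    · exact hb _ _ _ c q' (by grind) hc (Or.inr rfl) (by simp [hvc]) (by simp)
    · exact hb _ _ _ c q (by grind) hc (Or.inl rfl) (by simp [hvc]) (by simp)
  refine Win.ask h1 (Win.ask h2 ?_ ?_) ?_
  · exact (hp _ _ (by grind) subset_rfl (by simp) (by simp)).le (by omega)
  · exact key _ _ p' (by grind) (by grind) (Or.inr rfl) (by simp)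
  · exact (key _ _ p (by grind) (by grind) (Or.inl rfl) (by simp)).le (by omega)

theorem exists_split {j : ℕ} {l : List ℕ} (h : j + 2 ≤ l.length) :
    ∃ p l₁ p' l₂, l = p :: l₁ ++ p' :: l₂ ∧ l₁.length = j := by
  cases l with
  | nil => simp at h
  | cons p l =>
    simp only [List.length_cons] at h
    refine ⟨p, l.take j, l[j], l.drop (j + 1), ?_, by simp; omega⟩
    simp

theorem win_of_blue_bridge {k n m : ℕ} {r b : Set (Sym2 ℕ)} {v c d : ℕ} {S S' U U' : List ℕ}
    (hS : IsPath b (S ++ c :: S')) (hU : IsPath b (U ++ d :: U'))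
    (hnd : (v :: (S ++ c :: S' ++ (U ++ d :: U'))).Nodup) (hc : s(v, c) ∈ b) (hd : s(v, d) ∈ b)
    (hn : n ≤ S'.length + U'.length + 3) : Win k n m r b := by
  have h1 := (isPath_append.1 hS).2.1
  have h2 := (isPath_append.1 hU).2.1
  refine Win.of_bluePath (l := S'.reverse ++ c :: v :: d :: U') ?_
    (h1.join (h2.cons hd) (by rwa [Sym2.eq_swap])) ?_
  · have : (S ++ U ++ (S'.reverse ++ c :: v :: d :: U')).Nodup := by
      refine List.Perm.nodup_iff ?_ |>.1 hnd
      grind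
    exact this.of_append_right
  · simp
    omega

/-- A red triangle together with two blue paths of total length at least `n + k`. -/
theorem win_of_two_paths {k n : ℕ} (hk : 5 ≤ k) (hko : Odd k) {r b : Set (Sym2 ℕ)} {x y z : ℕ}
    {P Q : List ℕ} (hxy : s(x, y) ∈ r) (hyz : s(y, z) ∈ r) (hzx : s(z, x) ∈ r) (hP : IsPath b P)
    (hQ : IsPath b Q) (hnd : ([x, y, z] ++ (P ++ Q)).Nodup) (hn : n + k ≤ P.length + Q.length) :
    Win k n (k + 11) r b := by
  obtain ⟨j, rfl⟩ : ∃ j, k = 2 * j + 5 := by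
    obtain ⟨i, rfl⟩ := hko
    exact ⟨i - 2, by omega⟩
  have hPQ : (P ++ Q).Nodup := hnd.of_append_right
  by_cases hP' : P.length ≤ j + 1
  · exact Win.of_bluePath hPQ.of_append_right hQ (by omega)
  by_cases hQ' : Q.length ≤ j + 1
  · exact Win.of_bluePath hPQ.of_append_left hP (by omega)
  obtain ⟨p, P₁, p', P₂, rfl, hP₁⟩ : ∃ p P₁ p' P₂, P = p :: P₁ ++ p' :: P₂ ∧ P₁.length = j :=
    exists_split (by omega)
  obtain ⟨q, Q₁, q', Q₂, rfl, hQ₁⟩ : ∃ q Q₁ q' Q₂, Q = q :: Q₁ ++ q' :: Q₂ ∧ Q₁.length = j :=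
    exists_split (by omega)
  set P := p :: P₁ ++ p' :: P₂ with hPdef
  set Q := q :: Q₁ ++ q' :: Q₂ with hQdef
  obtain ⟨l, hl, hl'⟩ : ∃ l, l.length = 2 * j ∧ p :: q :: l ++ [p', q'] =
      zigzag (2 * (j + 1) + 2) P Q := by
    refine ⟨zigzag (2 * j) P₁ Q₁, zigzag_length _ _ _ (by omega) (by omega), ?_⟩
    rw [hPdef, hQdef, zigzag_append (j + 1) (p :: P₁) (q :: Q₁) p' q' P₂ Q₂ (by simp [hP₁])
      (by simp [hQ₁])]
    simp [Nat.mul_succ, zigzag]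
  have hlnd : (p :: q :: l ++ [p', q']).Nodup := hl' ▸ zigzag_nodup _ _ _ hPQ
  have hlsub : p :: q :: l ++ [p', q'] ⊆ P ++ Q := hl' ▸ zigzag_subset _ _ _
  have hchain := zigzag_isChain (n := n) (2 * (j + 1) + 2) P Q hPQ hP hQ (by omega)
  rw [← hl'] at hchain
  refine (Win.offer_path (m := 12) _ (hchain.imp fun u v h => ⟨h.1, fun r' => h.2 _ _ r'⟩)
    fun r₁ hr₁ hp => ?_).le (by simp; omega)
  have hsplit₁ : ∀ c, c = p ∨ c = p' → ∃ S S', P = S ++ c :: S' ∧ S.length ≤ j + 1 := by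
    rintro c (rfl | rfl)
    exacts [⟨[], _, rfl, by simp⟩, ⟨p :: P₁, P₂, rfl, by simp [hP₁]⟩]
  have hsplit₂ : ∀ c, c = q ∨ c = q' → ∃ S S', Q = S ++ c :: S' ∧ S.length ≤ j + 1 := by
    rintro c (rfl | rfl)
    exacts [⟨[], _, rfl, by simp⟩, ⟨q :: Q₁, Q₂, rfl, by simp [hQ₁]⟩]
  have hdisj : ∀ v ∈ [x, y, z], v ∉ P ++ Q := List.disjoint_of_nodup_append hnd
  have hblue : ∀ v ∈ [x, y, z], ∀ (m' : ℕ) (r' b' : Set (Sym2 ℕ)) (c d : ℕ), b ⊆ b' →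
      c = p ∨ c = p' → d = q ∨ d = q' → s(v, c) ∈ b' → s(v, d) ∈ b' →
      Win (2 * j + 5) n m' r' b' := by
    intro v hv m' r' b' c d hb hc hd hvc hvd
    obtain ⟨S, S', hS, hSl⟩ := hsplit₁ c hc
    obtain ⟨U, U', hU, hUl⟩ := hsplit₂ d hd
    have hSl' := congrArg List.length hS
    have hUl' := congrArg List.length hU
    refine win_of_blue_bridge (S := S) (U := U) (hS ▸ hP.mono hb) (hU ▸ hQ.mono hb) ?_ hvc hvd ?_
    · rw [← hS, ← hU]
      exact List.nodup_cons.2 ⟨hdisj v hv, hPQ⟩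
    · simp only [List.length_append, List.length_cons] at hSl' hUl'
      omega
  have hp₁ : p :: q :: l ++ [p', q'] = (p :: q :: l ++ [p']) ++ [q'] := by simp
  have hp₂ : p :: q :: l ++ [p', q'] = p :: (q :: l ++ [p', q']) := by simp
  have hpath₁ : IsPath r₁ (p :: q :: l ++ [p']) := by
    rw [hp₁, isPath_append] at hp
    exact hp.1
  have hpath₂ : IsPath r₁ (q :: l ++ [p', q']) := by
    rw [hp₂] at hp
    exact hp.tail
  have hred : ∀ (u v : ℕ) (m' : ℕ) (r' b' : Set (Sym2 ℕ)), r₁ ⊆ r' → u ∈ [x, y, z] →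
      v ∈ [x, y, z] → u ≠ v →
      (s(u, p) ∈ r' ∧ s(u, p') ∈ r' ∧ s(v, p) ∈ r' ∧ s(v, p') ∈ r') ∨
      (s(u, q) ∈ r' ∧ s(u, q') ∈ r' ∧ s(v, q) ∈ r' ∧ s(v, q') ∈ r') →
      Win (2 * j + 5) n m' r' b' := by
    intro u v m' r' b' hr' hu hv huv hor
    have huvr : s(u, v) ∈ r' := by
      apply hr'
      apply hr₁
      simp only [List.mem_cons, List.not_mem_nil, or_false] at hu hv
      rcases hu with rfl | rfl | rfl <;> rcases hv with rfl | rfl | rfl <;>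
        first
        | exact absurd rfl huv
        | assumption
        | (rw [Sym2.eq_swap]; assumption)
    have hnd' : (u :: v :: (p :: q :: l ++ [p', q'])).Nodup := by
      refine List.nodup_cons.2 ⟨?_, List.nodup_cons.2 ⟨fun h => hdisj v hv (hlsub h), hlnd⟩⟩
      rw [List.mem_cons, not_or]
      exact ⟨huv, fun h => hdisj u hu (hlsub h)⟩
    apply Win.of_redCycle (by omega)
    rcases hor with ⟨h1, h2, h3, h4⟩ | ⟨h1, h2, h3, h4⟩
    · refine redCycle_of_path (l := p :: q :: l ++ [p']) (by simp [hl]) ?_ (hpath₁.mono hr') huvr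
        (by simpa using h1) (by rw [List.getLast?_append]; simpa using h4)
      rw [hp₁, ← List.cons_append, ← List.cons_append] at hnd'
      exact hnd'.of_append_left
    · refine redCycle_of_path (l := q :: l ++ [p', q']) (by simp [hl]) ?_ (hpath₂.mono hr') huvr
        (by simpa using h1) (by rw [List.getLast?_append]; simpa using h4)
      refine List.Nodup.of_cons (a := p) (List.Perm.nodup_iff ?_ |>.1 hnd')
      clear * -
      grind
  have hne : ∀ v ∈ [x, y, z], v ≠ p ∧ v ≠ p' ∧ v ≠ q ∧ v ≠ q' := by
    intro v hv
    have := hdisj v hv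
    refine ⟨?_, ?_, ?_, ?_⟩ <;> rintro rfl <;> simp [hPdef, hQdef] at this
  have hxyz : x ≠ y ∧ y ≠ z ∧ x ≠ z := by
    simp only [List.cons_append, List.nodup_cons, List.mem_cons, not_or] at hnd
    exact ⟨hnd.1.1, hnd.2.1.1, hnd.1.2.1⟩
  have hx : x ∈ [x, y, z] := by simp
  have hy : y ∈ [x, y, z] := by simp
  have hz : z ∈ [x, y, z] := by simp
  refine Win.ask_four (m := 8) (hne x hx) (fun r₂ b₂ hr₂ hb₂ x₁ x₂ => ?_)
    (fun r₂ b₂ hr₂ hb₂ x₁ x₂ => ?_) (hblue x hx)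
  · refine Win.ask_four (m := 4) (hne y hy)
      (fun r₃ b₃ hr₃ hb₃ y₁ y₂ => ?_) (fun r₃ b₃ hr₃ hb₃ y₁ y₂ => ?_)
      (fun m' r' b' c d hb' => hblue y hy m' r' b' c d (hb₂.trans hb'))
    · exact hred x y _ _ _ (hr₂.trans hr₃) hx hy hxyz.1 (Or.inl ⟨hr₃ x₁, hr₃ x₂, y₁, y₂⟩)
    · refine Win.ask_four (m := 0) (hne z hz)
        (fun r₄ b₄ hr₄ hb₄ z₁ z₂ => ?_) (fun r₄ b₄ hr₄ hb₄ z₁ z₂ => ?_)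
        (fun m' r' b' c d hb' => hblue z hz m' r' b' c d ((hb₂.trans hb₃).trans hb'))
      · exact hred x z _ _ _ ((hr₂.trans hr₃).trans hr₄) hx hz hxyz.2.2
          (Or.inl ⟨hr₄ (hr₃ x₁), hr₄ (hr₃ x₂), z₁, z₂⟩)
      · exact hred y z _ _ _ ((hr₂.trans hr₃).trans hr₄) hy hz hxyz.2.1
          (Or.inr ⟨hr₄ y₁, hr₄ y₂, z₁, z₂⟩)
  · refine Win.ask_four (m := 4) (hne y hy)
      (fun r₃ b₃ hr₃ hb₃ y₁ y₂ => ?_) (fun r₃ b₃ hr₃ hb₃ y₁ y₂ => ?_)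
      (fun m' r' b' c d hb' => hblue y hy m' r' b' c d (hb₂.trans hb'))
    · refine Win.ask_four (m := 0) (hne z hz)
        (fun r₄ b₄ hr₄ hb₄ z₁ z₂ => ?_) (fun r₄ b₄ hr₄ hb₄ z₁ z₂ => ?_)
        (fun m' r' b' c d hb' => hblue z hz m' r' b' c d ((hb₂.trans hb₃).trans hb'))
      · exact hred y z _ _ _ ((hr₂.trans hr₃).trans hr₄) hy hz hxyz.2.1
          (Or.inl ⟨hr₄ y₁, hr₄ y₂, z₁, z₂⟩)
      · exact hred x z _ _ _ ((hr₂.trans hr₃).trans hr₄) hx hz hxyz.2.2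
          (Or.inr ⟨hr₄ (hr₃ x₁), hr₄ (hr₃ x₂), z₁, z₂⟩)
    · exact hred x y _ _ _ (hr₂.trans hr₃) hx hy hxyz.1 (Or.inr ⟨hr₃ x₁, hr₃ x₂, y₁, y₂⟩)

/-- If `s` and `t` are the ends of a red path on `k - 1` vertices, then Builder can force a blue
edge from `v` to one of them. -/
theorem Win.ask_two {k n m : ℕ} (hk : 3 ≤ k) {r b : Set (Sym2 ℕ)} {s t v : ℕ} {l : List ℕ}
    (hl : l.length + 3 = k) (hp : IsPath r (s :: l ++ [t])) (hnd : (v :: (s :: l ++ [t])).Nodup)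
    (h : ∀ c, c = s ∨ c = t → Win k n m r (insert s(c, v) b)) : Win k n (m + 2) r b := by
  refine Win.ask (u := s) (v := v) ?_ (Win.ask (u := t) (v := v) ?_ ?_ ?_)
    ((h s (Or.inl rfl)).le (by omega))
  · rintro rfl
    simp at hnd
  · rintro rfl
    simp at hnd
  · refine Win.of_redCycle hk ⟨v :: (s :: l ++ [t]), hnd, by simp [← hl], ?_, ?_⟩
    · exact IsPath.cons ((hp.insert).insert) (by simp [Sym2.eq_swap])
    · intro x hx y hy
      obtain rfl : v = x := by simpa using hx
      rw [← List.cons_append, List.getLast?_append] at hy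
      obtain rfl : t = y := by simpa using hy
      simp
  · exact (h t (Or.inr rfl)).mono le_rfl (Set.subset_insert _ _) subset_rfl

theorem win_of_at_most_two_paths {k n : ℕ} (hk : 5 ≤ k) (hko : Odd k) {r b : Set (Sym2 ℕ)}
    {x y z : ℕ} {S : List (List ℕ)} (hxy : s(x, y) ∈ r) (hyz : s(y, z) ∈ r) (hzx : s(z, x) ∈ r)
    (hnd : ([x, y, z] ++ S.flatten).Nodup) (hS : ∀ p ∈ S, IsPath b p) (hSl : S.length ≤ 2)
    (hn : n + k ≤ S.flatten.length) : Win k n (k + 11) r b := by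
  rcases S with _ | ⟨P, _ | ⟨Q, _ | ⟨P', S⟩⟩⟩
  · simp at hn
    omega
  · simp only [List.flatten_cons, List.flatten_nil, List.append_nil] at hnd hn
    exact Win.of_bluePath hnd.of_append_right (hS P (by simp)) (by omega)
  · simp only [List.flatten_cons, List.flatten_nil, List.append_nil] at hnd hn
    exact win_of_two_paths hk hko hxy hyz hzx (hS P (by simp)) (hS Q (by simp)) hnd
      (by simpa using hn)
  · simp at hSl

theorem List.head?_reverse_append_cons {α : Type*} (u c v : α) (U V : List α) :
    (U.reverse ++ u :: c :: v :: V).head? = (u :: U).getLast? := by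
  have : U.reverse ++ u :: c :: v :: V = (u :: U).reverse ++ c :: v :: V := by simp
  rw [this, List.head?_append, List.head?_reverse, List.getLast?_cons]
  rfl

theorem List.getLast?_append_cons_cons_cons {α : Type*} (u c v : α) (U V : List α) :
    (U ++ u :: c :: v :: V).getLast? = (v :: V).getLast? := by
  have : U ++ u :: c :: v :: V = (U ++ [u, c]) ++ v :: V := by simp
  rw [this, List.getLast?_append, List.getLast?_cons]
  rfl

/-- Many blue paths together with a red path on `2 * k - 5` vertices can be merged into two. -/
theorem win_of_merge {k n : ℕ} (hk : 5 ≤ k) (hko : Odd k) {x y z : ℕ} (j : ℕ) :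
    ∀ (r b : Set (Sym2 ℕ)) (R₁ D R₂ : List ℕ) (S : List (List ℕ)), s(x, y) ∈ r → s(y, z) ∈ r →
      s(z, x) ∈ r → R₁.length = j → R₂.length = j → j + D.length + 2 = k →
      IsPath r (R₁ ++ D ++ R₂) → (R₁ ++ D ++ R₂).Nodup →
      ([x, y, z] ++ (S.flatten ++ (R₁ ++ R₂))).Nodup →
      (∀ p ∈ S, p ≠ [] ∧ IsPath b p ∧ (∀ u ∈ p.head?, u ∉ D) ∧ ∀ u ∈ p.getLast?, u ∉ D) →
      S.length ≤ j + 2 → n + k ≤ S.flatten.length → Win k n (6 * j + (k + 11)) r b := by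
  induction j with
  | zero =>
    intro r b R₁ D R₂ S hxy hyz hzx h₁ h₂ hD hpath hRnd hnd hS hSl hn
    rw [← List.append_assoc] at hnd
    exact (win_of_at_most_two_paths hk hko hxy hyz hzx hnd.of_append_left
      (fun p hp => (hS p hp).2.1) hSl hn).le (by omega)
  | succ j ih =>
    intro r b R₁ D R₂ S hxy hyz hzx h₁ h₂ hD hpath hRnd hnd hS hSl hn
    by_cases hS2 : S.length ≤ 2
    · rw [← List.append_assoc] at hnd
      exact (win_of_at_most_two_paths hk hko hxy hyz hzx hnd.of_append_left
        (fun p hp => (hS p hp).2.1) hS2 hn).le (by omega)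
    obtain ⟨s, R₁, rfl⟩ := List.exists_cons_of_length_eq_add_one h₁
    obtain ⟨t, R₂, rfl⟩ := List.exists_cons_of_length_eq_add_one h₂
    simp only [List.length_cons, Nat.add_right_cancel_iff] at h₁ h₂
    have hSnd : (S.flatten ++ (s :: R₁ ++ t :: R₂)).Nodup := hnd.of_append_right
    have htS : ∀ p ∈ S, t ∉ p := by
      intro p hp ht
      have : t ∈ S.flatten := List.mem_flatten.2 ⟨p, hp, ht⟩
      exact List.disjoint_of_nodup_append hSnd this (by simp)
    have hmerge : ∀ (b' : Set (Sym2 ℕ)) (c u v : ℕ) (U V : List ℕ) (S' : List (List ℕ)),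
        b ⊆ b' → c = s ∨ c = t → S.Perm ((u :: U) :: (v :: V) :: S') → s(c, u) ∈ b' →
        s(c, v) ∈ b' → Win k n (6 * j + (k + 11)) r b' := by
      intro b' c u v U V S' hb hc hperm hcu hcv
      have hU := hS _ (hperm.mem_iff.2 (by simp : (u :: U) ∈ _))
      have hV := hS _ (hperm.mem_iff.2 (by simp : (v :: V) ∈ _))
      have htU := htS _ (hperm.mem_iff.2 (by simp : (u :: U) ∈ _))
      have htV := htS _ (hperm.mem_iff.2 (by simp : (v :: V) ∈ _))
      have hfl := hperm.flatten
      have hlen := hfl.length_eq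
      have hlen' := hperm.length_eq
      simp only [List.flatten_cons, List.length_append, List.length_cons] at hlen hlen'
      refine ih r b' R₁ (D ++ [t]) R₂ ((U.reverse ++ u :: c :: v :: V) :: S') hxy hyz hzx h₁ h₂
        (by simp; omega) ?_ ?_ ?_ ?_ ?_ ?_
      · simpa using hpath.tail
      · simpa using hRnd.of_cons
      · have h1 : (s :: t :: ([x, y, z] ++
            ((u :: U) ++ ((v :: V) ++ S'.flatten) ++ (R₁ ++ R₂)))).Nodup := by
          refine List.Perm.nodup_iff ?_ |>.1 hnd
          refine (List.Perm.append_left _ (hfl.append_right _)).trans ?_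
          clear * -
          grind
        rcases hc with rfl | rfl
        · refine List.Nodup.of_cons (a := t) (List.Perm.nodup_iff ?_ |>.1 h1)
          clear * -
          grind
        · refine List.Nodup.of_cons (a := s) (List.Perm.nodup_iff ?_ |>.1 h1)
          clear * -
          grind
      · intro p hp
        rw [List.mem_cons] at hp
        rcases hp with rfl | hp
        · refine ⟨by simp, ?_, ?_, ?_⟩
          · refine (hU.2.1.mono hb).join ((hV.2.1.mono hb).cons hcv) ?_
            rwa [Sym2.eq_swap]
          · rw [List.head?_reverse_append_cons]
            intro w hw
            have := hU.2.2.2 w hw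
            have := List.mem_of_getLast? hw
            grind
          · rw [List.getLast?_append_cons_cons_cons]
            intro w hw
            have := hV.2.2.2 w hw
            have := List.mem_of_getLast? hw
            grind
        · have hpS := hperm.mem_iff.2 (List.mem_cons_of_mem _ (List.mem_cons_of_mem _ hp))
          obtain ⟨g1, g2, g3, g4⟩ := hS p hpS
          have := htS p hpS
          refine ⟨g1, g2.mono hb, fun w hw => ?_, fun w hw => ?_⟩
          · have := g3 w hw
            have := List.mem_of_head? hw
            grind
          · have := g4 w hw
            have := List.mem_of_getLast? hw
            grind
      · simp only [List.length_cons]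
        omega
      · simp only [List.flatten_cons, List.length_append, List.length_cons, List.length_reverse]
        omega
    have hR : s :: R₁ ++ D ++ t :: R₂ = (s :: (R₁ ++ D) ++ [t]) ++ R₂ := by simp
    have hask : ∀ (m : ℕ) (b' : Set (Sym2 ℕ)) (v : ℕ) (V : List ℕ), v :: V ∈ S →
        (∀ c, c = s ∨ c = t → Win k n m r (insert s(c, v) b')) → Win k n (m + 2) r b' := by
      intro m b' v V hV
      rw [hR, isPath_append] at hpath
      rw [hR] at hRnd
      refine Win.ask_two (by omega) (by simp; omega) hpath.1
        (List.nodup_cons.2 ⟨?_, hRnd.of_append_left⟩)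
      have h1 := (hS _ hV).2.2.1 v (by simp)
      have h2 : v ∈ S.flatten := List.mem_flatten.2 ⟨_, hV, by simp⟩
      have h3 := List.disjoint_of_nodup_append hSnd h2
      simp only [List.cons_append, List.mem_cons, List.mem_append, List.not_mem_nil, or_false]
        at h3 ⊢
      tauto
    match S, hS, hS2, hask, hmerge with
    | [], _, hS2, _, _ => simp at hS2
    | [_], _, hS2, _, _ => simp at hS2
    | [_, _], _, hS2, _, _ => simp at hS2
    | [] :: _, hS, _, _, _ => exact absurd rfl (hS [] (by simp)).1
    | _ :: [] :: _, hS, _, _, _ => exact absurd rfl (hS [] (by simp)).1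
    | _ :: _ :: [] :: _, hS, _, _, _ => exact absurd rfl (hS [] (by simp)).1
    | (u :: U) :: (v :: V) :: (w :: W) :: S, _, _, hask, hmerge =>
      refine (hask (6 * j + (k + 11) + 4) b u U (by simp) fun c₁ hc₁ => ?_).le (by omega)
      refine hask (6 * j + (k + 11) + 2) _ v V (by simp) fun c₂ hc₂ => ?_
      by_cases h12 : c₁ = c₂
      · subst h12
        exact (hmerge _ c₁ u v U V _ (by grind) hc₁ (List.Perm.refl _) (by simp) (by simp)).le
          (by omega)
      refine hask (6 * j + (k + 11)) _ w W (by simp) fun c₃ hc₃ => ?_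
      have h3 : c₃ = c₁ ∨ c₃ = c₂ := by
        rcases hc₁ with rfl | rfl <;> rcases hc₂ with rfl | rfl <;> tauto
      rcases h3 with rfl | rfl
      · exact hmerge _ c₃ u w U W ((v :: V) :: S) (by grind) hc₃ (by grind) (by simp) (by simp)
      · exact hmerge _ c₃ v w V W ((u :: U) :: S) (by grind) hc₃ (by grind) (by simp) (by simp)

/-- A red path on `2 * k - 5` vertices, a red triangle and at most `k - 1` blue paths. -/
theorem win_of_trunk {k n : ℕ} (hk : 5 ≤ k) (hko : Odd k) {r b : Set (Sym2 ℕ)} {x y z : ℕ}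
    {R : List ℕ} {S : List (List ℕ)} (hxy : s(x, y) ∈ r) (hyz : s(y, z) ∈ r) (hzx : s(z, x) ∈ r)
    (hRl : R.length = 2 * k - 5) (hR : IsPath r R) (hnd : ([x, y, z] ++ (S.flatten ++ R)).Nodup)
    (hS : ∀ p ∈ S, IsPath b p) (hSl : S.length ≤ k - 1) (hn : n + k ≤ S.flatten.length) :
    Win k n (7 * k) r b := by
  obtain ⟨R₁, d, R₂, rfl, h₁⟩ : ∃ R₁ d R₂, R = R₁ ++ [d] ++ R₂ ∧ R₁.length = k - 3 := by
    refine ⟨R.take (k - 3), R[k - 3], R.drop (k - 3 + 1), ?_, by simp; omega⟩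
    simp
  have h₂ : R₂.length = k - 3 := by
    simp at hRl
    omega
  have hflat : (S.filter (· ≠ [])).flatten = S.flatten := by
    simpa using List.flatten_filter_ne_nil (L := S)
  have hd : d ∉ S.flatten := fun h =>
    List.disjoint_of_nodup_append (List.nodup_append.1 hnd).2.1 h (by simp)
  have hdS : ∀ p ∈ S, ∀ u ∈ p, u ≠ d := by
    rintro p hp u hu rfl
    exact hd (List.mem_flatten.2 ⟨p, hp, hu⟩)
  refine (win_of_merge hk hko (k - 3) r b R₁ [d] R₂ (S.filter (· ≠ [])) hxy hyz hzx h₁ h₂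
    (by simp; omega) hR hnd.of_append_right.of_append_right ?_ ?_ ?_ ?_).le (by omega)
  · rw [hflat]
    refine List.Nodup.of_cons (a := d) (List.Perm.nodup_iff ?_ |>.1 hnd)
    clear * -
    grind
  · intro p hp
    simp only [ne_eq, decide_not, List.mem_filter, Bool.not_eq_true', decide_eq_false_iff_not]
      at hp
    exact ⟨hp.2, hS p hp.1, fun u hu => by simpa using hdS p hp.1 u (List.mem_of_head? hu),
      fun u hu => by simpa using hdS p hp.1 u (List.mem_of_getLast? hu)⟩
  · have := List.length_filter_le (· ≠ []) S
    omega
  · rwa [hflat]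

/-- The vertices of a list of paths, each given by its head and tail. -/
def verts (I : List (ℕ × List ℕ)) : List ℕ := I.flatMap fun p => p.1 :: p.2

theorem verts_cons (p : ℕ × List ℕ) (I : List (ℕ × List ℕ)) :
    verts (p :: I) = p.1 :: p.2 ++ verts I := rfl

theorem verts_nil : verts [] = [] := rfl

theorem verts_append (I J : List (ℕ × List ℕ)) : verts (I ++ J) = verts I ++ verts J :=
  List.flatMap_append

theorem verts_perm (I : List (ℕ × List ℕ)) :
    (verts I).Perm (I.map Prod.fst ++ (I.map Prod.snd).flatten) := by
  induction I with
  | nil => rfl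
  | cons p I ih =>
    rw [verts_cons]
    refine (ih.append_left _).trans ?_
    simp only [List.map_cons, List.flatten_cons]
    clear ih
    grind

/-- Disjoint blue paths `I` and `W` avoiding `T` such that the heads of the members of `I`
followed by `T₀` form a red path. -/
structure Stack (r b : Set (Sym2 ℕ)) (T : List ℕ) (I W : List (ℕ × List ℕ)) (T₀ : List ℕ) :
    Prop where
  nodup : (T ++ (verts I ++ verts W ++ T₀)).Nodup
  red : IsPath r (I.map Prod.fst ++ T₀)
  blue : ∀ p ∈ I ++ W, IsPath b (p.1 :: p.2)

theorem IsPath.exists_join {b : Set (Sym2 ℕ)} {P Q : ℕ × List ℕ} (hP : IsPath b (P.1 :: P.2))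
    (hQ : IsPath b (Q.1 :: Q.2)) (h : s(P.1, Q.1) ∈ b) : ∃ G : ℕ × List ℕ,
      IsPath b (G.1 :: G.2) ∧ (G.1 :: G.2).Perm ((P.1 :: P.2) ++ (Q.1 :: Q.2)) := by
  have hperm : (P.2.reverse ++ P.1 :: Q.1 :: Q.2).Perm ((P.1 :: P.2) ++ (Q.1 :: Q.2)) := by
    clear * -
    grind
  have hpath := hP.join hQ h
  obtain ⟨g, G, hG⟩ := List.exists_cons_of_ne_nil
    (by simp : P.2.reverse ++ P.1 :: Q.1 :: Q.2 ≠ [])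
  rw [hG] at hperm hpath
  exact ⟨(g, G), hpath, hperm⟩

/-- Builder joins the head of the first path of `I` to the head of the first path of `W`. -/
theorem Stack.step {k n m : ℕ} {r b : Set (Sym2 ℕ)} {T T₀ : List ℕ} {Q F : ℕ × List ℕ}
    {I W : List (ℕ × List ℕ)} (h : Stack r b T (Q :: I) (F :: W) T₀)
    (h₁ : ∀ r' : Set (Sym2 ℕ), r ⊆ r' → Stack r' b T (F :: Q :: I) W T₀ → Win k n m r' b)
    (h₂ : ∀ (b' : Set (Sym2 ℕ)) (G : ℕ × List ℕ), G.2.length = Q.2.length + F.2.length + 1 →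
      Stack r b' T I (G :: W) T₀ → Win k n m r b') : Win k n (m + 1) r b := by
  obtain ⟨hnd, hred, hblue⟩ := h
  refine Win.ask (u := Q.1) (v := F.1) ?_ ?_ ?_
  · intro he
    simp only [verts_cons] at hnd
    clear * - hnd he
    grind
  · refine h₁ _ (Set.subset_insert _ _) ⟨?_, hred.insert.cons ?_, ?_⟩
    · refine List.Perm.nodup_iff ?_ |>.1 hnd
      simp only [verts_cons]
      clear * -
      grind
    · simp [Sym2.eq_swap]
    · intro p hp
      apply hblue
      simp only [List.mem_append, List.mem_cons] at hp ⊢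
      tauto
  · obtain ⟨G, hG, hperm⟩ := IsPath.exists_join (b := insert s(Q.1, F.1) b)
      (hblue Q (by simp)).insert (hblue F (by simp)).insert (Set.mem_insert _ _)
    refine h₂ _ G ?_ ⟨?_, hred.tail, ?_⟩
    · have := hperm.length_eq
      simp at this
      omega
    · refine List.Perm.nodup_iff ?_ |>.1 hnd
      simp only [verts_cons]
      clear * - hperm
      grind
    · intro p hp
      simp only [List.mem_append, List.mem_cons] at hp
      rcases hp with hp | rfl | hp
      · exact (hblue p (by simp [hp])).insert
      · exact hG
      · exact (hblue p (by simp [hp])).insert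

theorem Stack.win_of_long_stack {k n : ℕ} (hk : 5 ≤ k) (hko : Odd k) {r b : Set (Sym2 ℕ)}
    {x y z : ℕ} {I W : List (ℕ × List ℕ)} {T₀ : List ℕ} (hxy : s(x, y) ∈ r) (hyz : s(y, z) ∈ r)
    (hzx : s(z, x) ∈ r) (h : Stack r b [x, y, z] I W T₀) (hl : I.length + T₀.length = 2 * k - 5)
    (hIW : I.length + W.length ≤ k - 1)
    (hn : n + 3 * k ≤ (verts I).length + (verts W).length + T₀.length) : Win k n (7 * k) r b := by
  obtain ⟨hnd, hred, hblue⟩ := h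
  have hW : (W.map fun p => p.1 :: p.2).flatten = verts W := (List.flatMap_def ..).symm
  have hI := (verts_perm I).length_eq
  simp only [List.length_append, List.length_map] at hI
  refine win_of_trunk hk hko (R := I.map Prod.fst ++ T₀)
    (S := I.map Prod.snd ++ W.map fun p => p.1 :: p.2) hxy hyz hzx (by simpa using hl) hred ?_ ?_
    (by simpa using hIW) ?_
  · rw [List.flatten_append, hW]
    refine List.Perm.nodup_iff ?_ |>.1 hnd
    have := verts_perm I
    clear * - this
    grind
  · intro p hp
    rw [List.mem_append, List.mem_map, List.mem_map] at hp
    rcases hp with ⟨q, hq, rfl⟩ | ⟨q, hq, rfl⟩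
    · exact (hblue q (by simp [hq])).tail
    · exact hblue q (by simp [hq])
  · rw [List.flatten_append, hW, List.length_append]
    omega

/-- Builder extends the red path of heads, cutting off the last head when necessary. -/
theorem win_of_cut {k n : ℕ} (hk : 5 ≤ k) (hko : Odd k) {x y z : ℕ} (m : ℕ) :
    ∀ (r b : Set (Sym2 ℕ)) (I W : List (ℕ × List ℕ)) (T₀ : List ℕ), s(x, y) ∈ r → s(y, z) ∈ r →
      s(z, x) ∈ r → Stack r b [x, y, z] I W T₀ → W.length ≤ 1 →
      I.length + T₀.length ≤ 2 * k - 5 → I.length + W.length ≤ k - 1 →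
      n + 3 * k ≤ (verts I).length + (verts W).length + T₀.length →
      7 * k + 2 * (I.length + W.length) + (2 * k - 5 - (I.length + T₀.length)) ≤ m →
      Win k n m r b := by
  induction m using Nat.strong_induction_on with
  | _ m ih =>
  have hfloat : ∀ (r b : Set (Sym2 ℕ)) (I : List (ℕ × List ℕ)) (F : ℕ × List ℕ) (T₀ : List ℕ),
      s(x, y) ∈ r → s(y, z) ∈ r → s(z, x) ∈ r → Stack r b [x, y, z] I [F] T₀ →
      I.length + T₀.length ≤ 2 * k - 5 → I.length + 1 ≤ k - 1 →
      n + 3 * k ≤ (verts I).length + (F.2.length + 1) + T₀.length →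
      7 * k + 2 * (I.length + 1) + (2 * k - 5 - (I.length + T₀.length)) ≤ m →
      Win k n m r b := by
    intro r b I F T₀ hxy hyz hzx h hl hIW hn hm
    by_cases hlong : I.length + T₀.length = 2 * k - 5
    · exact (h.win_of_long_stack hk hko hxy hyz hzx hlong (by simpa using hIW)
        (by simpa [verts_cons, verts_nil] using hn)).le (by omega)
    cases I with
    | nil =>
      simp only [verts_nil, List.length_nil] at hn hl
      exact Win.of_bluePath (l := F.1 :: F.2)
        (by have := h.nodup; simp only [verts_cons, verts_nil] at this; clear * - this; grind)
        (h.blue F (by simp)) (by simp; omega)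
    | cons Q I =>
      obtain ⟨m, rfl⟩ : ∃ m', m = m' + 1 := ⟨m - 1, by omega⟩
      simp only [verts_cons, List.length_append, List.length_cons] at hn hl hIW hm hlong
      refine h.step (fun r' hr' h' => ?_) fun b' G hG h' => ?_
      · refine ih m (by omega) r' b _ _ _ (hr' hxy) (hr' hyz) (hr' hzx) h' (by simp) ?_ ?_ ?_ ?_
        all_goals
          try simp only [verts_cons, verts_nil, List.length_append, List.length_cons,
            List.length_nil]
          omega
      · refine ih m (by omega) r b' _ _ _ hxy hyz hzx h' (by simp) ?_ ?_ ?_ ?_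
        all_goals
          try simp only [verts_cons, verts_nil, List.length_append, List.length_cons,
            List.length_nil]
          omega
  intro r b I W T₀ hxy hyz hzx h hW hl hIW hn hm
  by_cases hlong : I.length + T₀.length = 2 * k - 5
  · exact (h.win_of_long_stack hk hko hxy hyz hzx hlong hIW hn).le (by omega)
  match W, hW with
  | [F], _ =>
    exact hfloat r b I F T₀ hxy hyz hzx h hl (by simpa using hIW)
      (by simpa [verts_cons, verts_nil] using hn) (by simpa using hm)
  | [], _ =>
    rcases List.eq_nil_or_concat I with rfl | ⟨I, ⟨a, A⟩, rfl⟩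
    · simp [verts_nil] at hn hl
      omega
    obtain ⟨hnd, hred, hblue⟩ := h
    simp only [verts_cons, verts_nil, verts_append, List.concat_eq_append, List.length_append,
      List.length_cons, List.length_nil] at hn hl hIW hm hlong hnd
    have hred' : IsPath r (I.map Prod.fst ++ a :: T₀) := by simpa using hred
    cases A with
    | nil =>
      refine ih (m - 1) (by omega) r b I [] (a :: T₀) hxy hyz hzx ⟨?_, hred', ?_⟩ (by simp) ?_ ?_ ?_
        ?_ |>.le (by omega)
      · refine List.Perm.nodup_iff ?_ |>.1 hnd
        clear * -
        grind [verts_nil]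
      · intro p hp
        exact hblue p (by simp at hp; simp [hp])
      all_goals
        simp only [verts_nil, List.length_cons, List.length_nil] at hn ⊢
        omega
    | cons f A =>
      refine hfloat r b I (f, A) (a :: T₀) hxy hyz hzx ⟨?_, hred', ?_⟩ ?_ ?_ ?_ ?_
      · refine List.Perm.nodup_iff ?_ |>.1 hnd
        simp only [verts_nil, verts_cons]
        clear * -
        grind
      · intro p hp
        simp only [List.mem_append, List.mem_singleton] at hp
        rcases hp with hp | rfl
        · exact hblue p (by simp [hp])
        · exact (hblue (a, f :: A) (by simp)).tail
      all_goals
        simp only [List.length_cons] at hn ⊢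
        omega

/-- Builder joins the first and the last head of a stack of `k` paths. -/
theorem Stack.close {k n m : ℕ} (hk : 3 ≤ k) {r b : Set (Sym2 ℕ)} {T : List ℕ}
    {P Q : ℕ × List ℕ} {I W : List (ℕ × List ℕ)} (h : Stack r b T (P :: (I ++ [Q])) W [])
    (hl : I.length + 2 = k)
    (h₂ : ∀ (b' : Set (Sym2 ℕ)) (G : ℕ × List ℕ), G.2.length = P.2.length + Q.2.length + 1 →
      Stack r b' T I (G :: W) [] → Win k n m r b') : Win k n (m + 1) r b := by
  obtain ⟨hnd, hred, hblue⟩ := h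
  refine Win.ask (u := P.1) (v := Q.1) ?_ ?_ ?_
  · intro he
    simp only [verts_cons, verts_append] at hnd
    clear * - hnd he
    grind
  · refine Win.of_redCycle hk ⟨(P :: (I ++ [Q])).map Prod.fst, ?_, by simpa using hl, ?_, ?_⟩
    · exact ((verts_perm (P :: (I ++ [Q]))).nodup_iff.1
        hnd.of_append_right.of_append_left.of_append_left).of_append_left
    · exact (by simpa using hred : IsPath r ((P :: (I ++ [Q])).map Prod.fst)).insert
    · intro u hu v hv
      rw [← List.cons_append, List.map_append, List.map_singleton, List.getLast?_concat] at hv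
      obtain rfl : P.1 = u := by simpa using hu
      obtain rfl : Q.1 = v := by simpa using hv
      simp [Sym2.eq_swap]
  · obtain ⟨G, hG, hperm⟩ := IsPath.exists_join (b := insert s(P.1, Q.1) b)
      (hblue P (by simp)).insert (hblue Q (by simp)).insert (Set.mem_insert _ _)
    refine h₂ _ G ?_ ⟨?_, ?_, ?_⟩
    · have := hperm.length_eq
      simp at this
      omega
    · refine List.Perm.nodup_iff ?_ |>.1 hnd
      simp only [verts_cons, verts_append, verts_nil]
      clear * - hperm
      grind
    · have : IsPath r (I.map Prod.fst ++ [Q.1]) := by simpa using hred.tail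
      simpa using (isPath_append.1 this).1
    · intro p hp
      simp only [List.mem_append, List.mem_cons] at hp
      rcases hp with hp | rfl | hp
      · exact (hblue p (by simp [hp])).insert
      · exact hG
      · exact (hblue p (by simp [hp])).insert

/-- Given a red triangle, Builder wins by growing a stack of blue paths with fewer than `k` members
until it covers enough vertices. -/
theorem win_of_stack {k n : ℕ} (hk : 5 ≤ k) (hko : Odd k) {x y z : ℕ} (m : ℕ) :
    ∀ (r b : Set (Sym2 ℕ)) (I W : List (ℕ × List ℕ)), s(x, y) ∈ r → s(y, z) ∈ r → s(z, x) ∈ r →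
      Stack r b [x, y, z] I W [] → I.length ≤ k →
      11 * k + 3 * ((n + 3 * k) - ((verts I).length + (verts W).length)) + 2 * I.length +
        3 * W.length ≤ m → Win k n m r b := by
  induction m using Nat.strong_induction_on with
  | _ m ih =>
  have hfloat : ∀ (r b : Set (Sym2 ℕ)) (I W : List (ℕ × List ℕ)) (F : ℕ × List ℕ),
      s(x, y) ∈ r → s(y, z) ∈ r → s(z, x) ∈ r → Stack r b [x, y, z] I (F :: W) [] →
      I.length < k →
      11 * k + 3 * ((n + 3 * k) - ((verts I).length + (verts (F :: W)).length)) + 2 * I.length +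
        3 * (W.length + 1) ≤ m → Win k n m r b := by
    intro r b I W F hxy hyz hzx h hl hm
    obtain ⟨m, rfl⟩ : ∃ m', m = m' + 1 := ⟨m - 1, by omega⟩
    cases I with
    | nil =>
      refine (ih m (by omega) r b [F] W hxy hyz hzx ⟨?_, List.isChain_singleton _, ?_⟩
        (by simp; omega) ?_).le (by omega)
      · simpa [verts_cons, verts_nil] using h.nodup
      · simpa using h.blue
      · simp only [verts_cons, verts_nil, List.length_append, List.length_cons,
          List.length_nil] at hm ⊢
        omega
    | cons Q I =>
      simp only [verts_cons, List.length_append, List.length_cons] at hl hm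
      refine h.step (fun r' hr' h' => ?_) fun b' G hG h' => ?_
      · refine ih m (by omega) r' b _ _ (hr' hxy) (hr' hyz) (hr' hzx) h' (by simp; omega) ?_
        simp only [verts_cons, List.length_append, List.length_cons]
        omega
      · refine ih m (by omega) r b' _ _ hxy hyz hzx h' (by omega) ?_
        simp only [verts_cons, List.length_append, List.length_cons]
        omega
  intro r b I W hxy hyz hzx h hl hm
  rcases hl.eq_or_lt with hl | hl
  · obtain ⟨m, rfl⟩ : ∃ m', m = m' + 1 := ⟨m - 1, by omega⟩
    cases I with
    | nil => simp at hl; omega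
    | cons P I =>
    rcases List.eq_nil_or_concat I with rfl | ⟨I, Q, rfl⟩
    · simp at hl; omega
    rw [List.concat_eq_append] at h hl hm
    simp only [verts_cons, verts_append, verts_nil, List.length_append, List.length_cons,
      List.length_nil] at hl hm
    refine h.close (by omega) (by omega) fun b' G hG h' => ?_
    refine ih m (by omega) r b' _ _ hxy hyz hzx h' (by omega) ?_
    simp only [verts_cons, List.length_append, List.length_cons]
    omega
  cases W with
  | cons F W => exact hfloat r b I W F hxy hyz hzx h hl hm
  | nil =>
    simp only [verts_nil, List.length_nil] at hm
    by_cases hn : n + 3 * k ≤ (verts I).length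
    · refine win_of_cut hk hko m r b I [] [] hxy hyz hzx h (by simp) ?_ ?_ ?_ ?_
      all_goals
        simp only [verts_nil, List.length_nil]
        omega
    · obtain ⟨hnd, hred, hblue⟩ := h
      obtain ⟨w, hw⟩ := exists_fresh ([x, y, z] ++ (verts I ++ verts [] ++ []))
      refine hfloat r b I [] (w, []) hxy hyz hzx ⟨?_, hred, ?_⟩ hl ?_
      · refine List.Perm.nodup_iff ?_ |>.1 (List.nodup_cons.2 ⟨hw, hnd⟩)
        simp only [verts_cons, verts_nil]
        clear * -
        grind
      · intro p hp
        simp only [List.mem_append, List.mem_singleton] at hp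
        rcases hp with hp | rfl
        · exact hblue p (by simp [hp])
        · exact List.isChain_singleton _
      · simp only [verts_cons, verts_nil, List.length_append, List.length_cons, List.length_nil]
        omega

/-- A list of paths presenting `P`, which is empty if `P` is. -/
theorem exists_verts_eq (P : List ℕ) :
    ∃ W : List (ℕ × List ℕ), verts W = P ∧ W.length ≤ 1 ∧ ∀ p ∈ W, p.1 :: p.2 = P := by
  cases P with
  | nil => exact ⟨[], rfl, by simp, by simp⟩
  | cons a A => exact ⟨[(a, A)], by simp [verts_cons, verts_nil], by simp, by simp⟩

theorem win_of_triangle {k n : ℕ} (hk : 3 ≤ k) (hko : Odd k) {m : ℕ} {r b : Set (Sym2 ℕ)}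
    {x y z : ℕ} {P Q : List ℕ} (hxy : s(x, y) ∈ r) (hyz : s(y, z) ∈ r) (hzx : s(z, x) ∈ r)
    (hP : IsPath b P) (hQ : IsPath b Q) (hnd : ([x, y, z] ++ (P ++ Q)).Nodup)
    (hm : 20 * k + 6 + 3 * (n - (P.length + Q.length)) ≤ m) : Win k n m r b := by
  by_cases hk5 : 5 ≤ k
  · obtain ⟨V, rfl, hVl, hV⟩ := exists_verts_eq P
    obtain ⟨W, rfl, hWl, hW⟩ := exists_verts_eq Q
    refine win_of_stack hk5 hko m r b [] (V ++ W) hxy hyz hzx ⟨?_, List.isChain_nil, ?_⟩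
      (by simp) ?_
    · simpa [verts_append, verts_nil] using hnd
    · intro p hp
      simp only [List.nil_append, List.mem_append] at hp
      rcases hp with hp | hp
      · rwa [hV p hp]
      · rwa [hW p hp]
    · simp only [verts_append, verts_nil, List.length_append, List.length_nil]
      omega
  · obtain rfl : k = 3 := by
      obtain ⟨j, rfl⟩ := hko
      omega
    exact Win.of_redCycle le_rfl ⟨[x, y, z], hnd.of_append_left, rfl, by simp [hxy, hyz],
      by simpa using hzx⟩

/-- For every odd `k ≥ 3` and every `n`, `r̃(C_k, P_n) ≤ 3n + 50k`. -/
theorem online_ramsey_odd_cycle_path (k n : ℕ) (hk : 3 ≤ k) (hko : Odd k) :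
    BuilderWinsIn emptyBoard (WinCP k n) (3 * n + 50 * k) := by
  refine Force.builderWinsIn (by simp [emptyBoard, Board.colored]) ?_
  have h := (win_of_triangle_phase (k := k) (n := n) (E := 20 * k + 6)
    (fun m r b x y z P Q hxy hyz hzx hP hQ hnd hm =>
      win_of_triangle hk hko hxy hyz hzx hP hQ hnd hm) (3 * n + 50 * k)).1 ∅ ∅ 0 []
    (by simp) (List.isChain_singleton _) (by simp; omega)
  exact h _ (Set.empty_subset _) (Set.empty_subset _)
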